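/- Let K be a field in which 1 + 1 ≠ 0 and consider, for parameters t ≠ 0 and c, the plane spectral curve λ² - (t + cz + z²)λ + z³ = 0 (the case r = 1). This affine curve has a singular point (a point where both partial derivatives with respect to λ and z vanish and the equation holds) if and only if c⁴ - c³ - 8tc² + 36tc + 16t² - 27t = 0. -/

import Mathlib

/-!
On the curve, `∂F/∂λ = 0` turns `F = 0` into `λ² = z³`. When `t` is a unit so is `z`, hence
`s = λ / z` satisfies `(z, λ) = (s², s³)`, and the partial derivatives give `c = 3s - 2s²` and
`t = s⁴ - s³`. This rational curve in the `(t, c)`-plane is the discriminant locus: substituting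
`c = 3s - 2s²`, the discriminant becomes `τ (16 τ + (4s - 3)³)` with `τ = t - (s⁴ - s³)`. The
parameter `s` is a rational function of `t` and `c` on the locus, so a singular point is already
defined over the field of `t` and `c`.
-/

/-- The point `(z, l)` is a singular point of the affine curve `F = 0`, where
`F = l² - (t + cz + z²) l + z³`: the three equations are `F = 0`, `∂F/∂z = 0` and `∂F/∂l = 0`, with
the partial derivatives written out. -/
def IsSpectralCurveSingularPoint {R : Type*} [CommRing R] (t c z l : R) : Prop :=
  l ^ 2 - (t + c * z + z ^ 2) * l + z ^ 3 = 0 ∧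
  -(c + 2 * z) * l + 3 * z ^ 2 = 0 ∧
  2 * l - (t + c * z + z ^ 2) = 0

/-- The polynomial in `t` and `c` whose vanishing, for `t ≠ 0`, detects singular spectral curves. -/
def spectralDiscriminant {R : Type*} [CommRing R] (t c : R) : R :=
  c ^ 4 - c ^ 3 - 8 * t * c ^ 2 + 36 * t * c + 16 * t ^ 2 - 27 * t

section CommRing

variable {R : Type*} [CommRing R] {t c z l : R}

namespace IsSpectralCurveSingularPoint

theorem of_param (s : R) :
    IsSpectralCurveSingularPoint (s ^ 4 - s ^ 3) (3 * s - 2 * s ^ 2) (s ^ 2) (s ^ 3) :=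
  ⟨by ring, by ring, by ring⟩

theorem sq_eq_cube (h : IsSpectralCurveSingularPoint t c z l) : l ^ 2 = z ^ 3 := by
  obtain ⟨hF, -, hFl⟩ := h
  linear_combination l * hFl - hF

theorem dvd_sq (h : IsSpectralCurveSingularPoint t c z l) : z ∣ t ^ 2 := by
  have ht : t = 2 * l - c * z - z ^ 2 := by linear_combination -h.2.2
  refine ⟨4 * z ^ 2 - 4 * l * (c + z) + z * (c + z) ^ 2, ?_⟩
  rw [ht]
  linear_combination 4 * h.sq_eq_cube

theorem exists_param (ht : IsUnit t) (h : IsSpectralCurveSingularPoint t c z l) :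
    ∃ s, z = s ^ 2 ∧ l = s ^ 3 ∧ t = s ^ 4 - s ^ 3 ∧ c = 3 * s - 2 * s ^ 2 := by
  have hz : IsUnit z := isUnit_of_dvd_unit h.dvd_sq (ht.pow 2)
  obtain ⟨s, rfl⟩ : z ∣ l := hz.dvd
  obtain rfl : z = s ^ 2 := (hz.pow 2).mul_left_cancel (by linear_combination -h.sq_eq_cube)
  have hs : IsUnit s := (isUnit_pow_iff two_ne_zero).mp hz
  obtain ⟨-, hFz, hFl⟩ := h
  obtain rfl : c = 3 * s - 2 * s ^ 2 :=
    (hs.pow 3).mul_left_cancel (by linear_combination -hFz)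
  exact ⟨s, rfl, by ring, by linear_combination -hFl, rfl⟩

end IsSpectralCurveSingularPoint

theorem exists_isSpectralCurveSingularPoint_iff_exists_param (ht : IsUnit t) :
    (∃ z l, IsSpectralCurveSingularPoint t c z l) ↔
      ∃ s, t = s ^ 4 - s ^ 3 ∧ c = 3 * s - 2 * s ^ 2 := by
  constructor
  · rintro ⟨z, l, h⟩
    obtain ⟨s, -, -, hs⟩ := h.exists_param ht
    exact ⟨s, hs⟩
  · rintro ⟨s, rfl, rfl⟩
    exact ⟨s ^ 2, s ^ 3, .of_param s⟩

theorem spectralDiscriminant_three_mul_sub_two_mul_sq (t s : R) :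
    spectralDiscriminant t (3 * s - 2 * s ^ 2) =
      (t - (s ^ 4 - s ^ 3)) * (16 * (t - (s ^ 4 - s ^ 3)) + (4 * s - 3) ^ 3) := by
  unfold spectralDiscriminant
  ring

theorem spectralDiscriminant_param (s : R) :
    spectralDiscriminant (s ^ 4 - s ^ 3) (3 * s - 2 * s ^ 2) = 0 := by
  rw [spectralDiscriminant_three_mul_sub_two_mul_sq, sub_self, zero_mul]

theorem map_spectralDiscriminant {S : Type*} [CommRing S] (f : R →+* S) (t c : R) :
    f (spectralDiscriminant t c) = spectralDiscriminant (f t) (f c) := by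
  simp only [spectralDiscriminant, map_add, map_sub, map_mul, map_pow, map_ofNat]

end CommRing

section Field

variable {K : Type*} [Field K] {t c : K}

-- At the cusp `c = 9/8` of the discriminant locus the parameter is `s = 3/4`.
theorem exists_param_of_spectralDiscriminant_eq_zero_of_cusp
    (hc : 9 - 8 * c = 0) (hD : spectralDiscriminant t c = 0) :
    ∃ s, t = s ^ 4 - s ^ 3 ∧ c = 3 * s - 2 * s ^ 2 := by
  have h2 : (2 : K) ≠ 0 := fun h ↦ one_ne_zero (α := K) (by linear_combination hc + (4 * c - 4) * h)
  obtain ⟨s, hs⟩ : ∃ s : K, 4 * s - 3 = 0 := ⟨3 / 2 / 2, by field_simp; ring⟩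
  obtain rfl : c = 3 * s - 2 * s ^ 2 :=
    mul_left_cancel₀ (pow_ne_zero 3 h2) (by linear_combination (4 * s - 3) * hs - hc)
  rw [spectralDiscriminant_three_mul_sub_two_mul_sq] at hD
  have hsq : (2 ^ 2 * (t - (s ^ 4 - s ^ 3))) ^ 2 = 0 := by
    linear_combination hD - (t - (s ^ 4 - s ^ 3)) * (4 * s - 3) ^ 2 * hs
  have hτ : t - (s ^ 4 - s ^ 3) = 0 :=
    (mul_eq_zero.mp (sq_eq_zero_iff.mp hsq)).resolve_left (pow_ne_zero 2 h2)
  exact ⟨s, sub_eq_zero.mp hτ, rfl⟩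

-- Reducing `8 (s⁴ - s³)` modulo `2s² - 3s + c` gives `(9 - 8c) s + 2c² - 3c`, which determines `s`.
theorem exists_param_of_spectralDiscriminant_eq_zero_of_not_cusp
    (hc : 9 - 8 * c ≠ 0) (hD : spectralDiscriminant t c = 0) :
    ∃ s, t = s ^ 4 - s ^ 3 ∧ c = 3 * s - 2 * s ^ 2 := by
  obtain ⟨s, hs⟩ : ∃ s, (9 - 8 * c) * s = 8 * t - 2 * c ^ 2 + 3 * c :=
    ⟨_, mul_div_cancel₀ _ hc⟩
  obtain rfl : c = 3 * s - 2 * s ^ 2 := by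
    apply mul_left_cancel₀ (pow_ne_zero 2 hc)
    unfold spectralDiscriminant at hD
    linear_combination 8 * hD +
      (2 * ((9 - 8 * c) * s + (8 * t - 2 * c ^ 2 + 3 * c)) - 3 * (9 - 8 * c)) * hs
  have h8τ : 8 * (t - (s ^ 4 - s ^ 3)) = 0 := by linear_combination -hs
  have hs3 : 4 * s - 3 ≠ 0 := fun h ↦ hc (by linear_combination (4 * s - 3) * h)
  rw [spectralDiscriminant_three_mul_sub_two_mul_sq] at hD
  have hτ : t - (s ^ 4 - s ^ 3) = 0 :=
    mul_left_cancel₀ (pow_ne_zero 3 hs3)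
      (by linear_combination hD - 2 * (t - (s ^ 4 - s ^ 3)) * h8τ)
  exact ⟨s, sub_eq_zero.mp hτ, rfl⟩

theorem spectralDiscriminant_eq_zero_iff_exists_param :
    spectralDiscriminant t c = 0 ↔ ∃ s, t = s ^ 4 - s ^ 3 ∧ c = 3 * s - 2 * s ^ 2 := by
  constructor
  · intro hD
    by_cases hc : 9 - 8 * c = 0
    · exact exists_param_of_spectralDiscriminant_eq_zero_of_cusp hc hD
    · exact exists_param_of_spectralDiscriminant_eq_zero_of_not_cusp hc hD
  · rintro ⟨s, rfl, rfl⟩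
    exact spectralDiscriminant_param s

end Field

theorem qP1_spectral_curve_singular_iff_general {K L : Type*} [Field K] [CommRing L]
    [Nontrivial L] [Algebra K L] (t c : K) (ht : t ≠ 0) :
    (∃ z₀ l₀ : L,
      let φ := algebraMap K L
      l₀ ^ 2 - (φ t + φ c * z₀ + z₀ ^ 2) * l₀ + z₀ ^ 3 = 0 ∧
      -(φ c + 2 * z₀) * l₀ + 3 * z₀ ^ 2 = 0 ∧
      2 * l₀ - (φ t + φ c * z₀ + z₀ ^ 2) = 0) ↔
    c ^ 4 - c ^ 3 - 8 * t * c ^ 2 + 36 * t * c + 16 * t ^ 2 - 27 * t = 0 := by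
  change (∃ z₀ l₀, IsSpectralCurveSingularPoint (algebraMap K L t) (algebraMap K L c) z₀ l₀) ↔
    spectralDiscriminant t c = 0
  rw [exists_isSpectralCurveSingularPoint_iff_exists_param (ht.isUnit.map (algebraMap K L))]
  constructor
  · rintro ⟨s, hts, hcs⟩
    apply (algebraMap K L).injective
    rw [map_spectralDiscriminant, hts, hcs, spectralDiscriminant_param, map_zero]
  · intro hD
    obtain ⟨s, rfl, rfl⟩ := spectralDiscriminant_eq_zero_iff_exists_param.mp hD
    exact ⟨algebraMap K L s, by simp only [map_sub, map_pow],
      by simp only [map_sub, map_mul, map_pow, map_ofNat]⟩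

/-- For char K ≠ 2, t ≠ 0, the spectral curve
λ² - (t + cz + z²)λ + z³ = 0 has a singular point over the algebraic closure
if and only if c⁴ - c³ - 8tc² + 36tc + 16t² - 27t = 0. -/
theorem qP1_spectral_curve_singular_iff {K : Type*} [Field K]
    (hchar : (1 : K) + 1 ≠ 0) (t c : K) (ht : t ≠ 0) :
    (∃ z₀ l₀ : AlgebraicClosure K,
      let φ := algebraMap K (AlgebraicClosure K)
      l₀ ^ 2 - (φ t + φ c * z₀ + z₀ ^ 2) * l₀ + z₀ ^ 3 = 0 ∧
      -(φ c + 2 * z₀) * l₀ + 3 * z₀ ^ 2 = 0 ∧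
      2 * l₀ - (φ t + φ c * z₀ + z₀ ^ 2) = 0) ↔
    c ^ 4 - c ^ 3 - 8 * t * c ^ 2 + 36 * t * c + 16 * t ^ 2 - 27 * t = 0 :=
  qP1_spectral_curve_singular_iff_general t c ht
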